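/- arXiv:2512.07759 — 2 statements merged into one kernel-verified Lean document; each statement's English description precedes it below -/
import Mathlib

section
/- Let n ≥ 3 and let f ∈ Out(F_n). If there exist distinct indices i, j such that the image in Out(F_n) of the left multiplication L_{x_i x_j} is contained in the normal closure N(f) of f in Out(F_n), then N(f) = SOut(F_n) if det(ρ̄(f)) = 1, and N(f) = Out(F_n) if det(ρ̄(f)) = −1. -/
open Matrix

namespace NormalClosurePaper

/-- The automorphism group of the free group on `n` generators. -/
abbrev FrAut (n : ℕ) := MulAut (FreeGroup (Fin n))

/-- Exponent sum of the generator `x_i` in a word of the free group. -/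
def expSum {n : ℕ} (i : Fin n) : FreeGroup (Fin n) →* Multiplicative ℤ :=
  FreeGroup.lift fun j => Multiplicative.ofAdd (if j = i then (1 : ℤ) else 0)

/-- The abelianized matrix of an automorphism of the free group:
the `(i, j)` entry is the exponent sum of `x_i` in `f x_j`. -/
def mat {n : ℕ} (f : FrAut n) : Matrix (Fin n) (Fin n) ℤ :=
  Matrix.of fun i j => (expSum i (f (FreeGroup.of j))).toAdd

lemma expSum_apply {n : ℕ} (f : FrAut n) (i : Fin n) (w : FreeGroup (Fin n)) :
    (expSum i (f w)).toAdd = ∑ k, mat f i k * (expSum k w).toAdd := by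
  induction w using FreeGroup.induction_on with
  | C1 => simp
  | of j =>
      have h : (expSum i (f (FreeGroup.of j))).toAdd = mat f i j := rfl
      rw [h]
      simp [expSum, mul_ite, Finset.sum_ite_eq]
  | inv_of j ih =>
      simp only [_root_.map_inv, toAdd_inv, mul_neg, Finset.sum_neg_distrib, ih]
  | mul x y ihx ihy =>
      simp only [_root_.map_mul, toAdd_mul, mul_add, Finset.sum_add_distrib, ihx, ihy]

lemma mat_one {n : ℕ} : mat (1 : FrAut n) = 1 := by
  ext i j
  simp [mat, expSum, Matrix.one_apply, eq_comm]

lemma mat_mul {n : ℕ} (f g : FrAut n) : mat (f * g) = mat f * mat g := by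
  ext i j
  rw [Matrix.mul_apply]
  show (expSum i ((f * g) (FreeGroup.of j))).toAdd = _
  rw [show (f * g) (FreeGroup.of j) = f (g (FreeGroup.of j)) from rfl, expSum_apply]
  rfl

/-- The matrix of the induced map on the abelianization, as a monoid homomorphism. -/
def matHom (n : ℕ) : FrAut n →* Matrix (Fin n) (Fin n) ℤ where
  toFun := mat
  map_one' := mat_one
  map_mul' := mat_mul

/-- The homomorphism `Aut(F_n) → GL_n(ℤ)` induced by abelianization. -/
def ρ (n : ℕ) : FrAut n →* GL (Fin n) ℤ := (matHom n).toHomUnits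

/-- The composition of `ρ` with the determinant. -/
def detρ (n : ℕ) : FrAut n →* ℤˣ := (Matrix.GeneralLinearGroup.det).comp (ρ n)

/-- The special automorphism group `SAut(F_n)`: automorphisms whose induced matrix
has determinant `1`. -/
def SAut (n : ℕ) : Subgroup (FrAut n) := (detρ n).ker

/-- The Torelli subgroup `IA_n`, the kernel of `ρ`. -/
def IA (n : ℕ) : Subgroup (FrAut n) := (ρ n).ker

/-- The group of inner automorphisms of the free group. -/
def Inn (n : ℕ) : Subgroup (FrAut n) := (MulAut.conj (G := FreeGroup (Fin n))).range

instance Inn_normal (n : ℕ) : (Inn n).Normal := by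
  constructor
  rintro - ⟨a, rfl⟩ g
  refine ⟨g a, ?_⟩
  ext y
  simp [MulAut.conj_apply, MulAut.mul_apply, _root_.map_mul, _root_.map_inv]

/-- The outer automorphism group `Out(F_n)`. -/
abbrev OutF (n : ℕ) := FrAut n ⧸ Inn n

/-- The projection `Aut(F_n) → Out(F_n)`. -/
def toOut (n : ℕ) : FrAut n →* OutF n := QuotientGroup.mk' (Inn n)

lemma mat_conj {n : ℕ} (g : FreeGroup (Fin n)) : mat (MulAut.conj g) = 1 := by
  rw [← mat_one (n := n)]
  ext i j
  simp only [mat, Matrix.of_apply, MulAut.conj_apply, MulAut.one_apply, _root_.map_mul,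
    _root_.map_inv, toAdd_mul, toAdd_inv]
  omega

lemma ρ_conj {n : ℕ} (g : FreeGroup (Fin n)) : ρ n (MulAut.conj g) = 1 :=
  Units.ext (mat_conj g)

/-- The homomorphism `Out(F_n) → GL_n(ℤ)` induced by abelianization. -/
def ρOut (n : ℕ) : OutF n →* GL (Fin n) ℤ :=
  QuotientGroup.lift (Inn n) (ρ n) (by rintro - ⟨g, rfl⟩; exact ρ_conj g)

/-- The composition of `ρOut` with the determinant. -/
def detρOut (n : ℕ) : OutF n →* ℤˣ := (Matrix.GeneralLinearGroup.det).comp (ρOut n)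

/-- The special outer automorphism group `SOut(F_n)`. -/
def SOut (n : ℕ) : Subgroup (OutF n) := (detρOut n).ker

/-- Entrywise reduction `GL_n(ℤ) → GL_n(ℤ/ℓℤ)`. -/
def redGL (n ℓ : ℕ) : GL (Fin n) ℤ →* GL (Fin n) (ZMod ℓ) :=
  Units.map (RingHom.mapMatrix (Int.castRingHom (ZMod ℓ))).toMonoidHom

/-- The subgroup `GΓ_n(ℓ)` of `GL_n(ℤ)` of matrices congruent to the identity mod `ℓ`. -/
def GGamma (n ℓ : ℕ) : Subgroup (GL (Fin n) ℤ) := (redGL n ℓ).ker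

/-- The level `ℓ` congruence subgroup `Γ_n(ℓ)` (viewed inside `GL_n(ℤ)`): matrices with
determinant `1` that are congruent to the identity mod `ℓ`. -/
def GammaGL (n ℓ : ℕ) : Subgroup (GL (Fin n) ℤ) :=
  GGamma n ℓ ⊓ (Matrix.GeneralLinearGroup.det).ker

/-- Reduction `SL_n(ℤ) → SL_n(ℤ/ℓℤ)`. -/
def redSL (n ℓ : ℕ) : Matrix.SpecialLinearGroup (Fin n) ℤ →*
    Matrix.SpecialLinearGroup (Fin n) (ZMod ℓ) :=
  Matrix.SpecialLinearGroup.map (Int.castRingHom (ZMod ℓ))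

/-- Projection `SL_n(ℤ/ℓℤ) → PSL_n(ℤ/ℓℤ)`. -/
def projPSL (n ℓ : ℕ) : Matrix.SpecialLinearGroup (Fin n) (ZMod ℓ) →*
    Matrix.ProjectiveSpecialLinearGroup (Fin n) (ZMod ℓ) :=
  QuotientGroup.mk' _

section Words

variable {α : Type*} [DecidableEq α]

/-- The length of the longest common prefix of two lists. -/
def commonPrefixLength {β : Type*} [DecidableEq β] : List β → List β → ℕ
  | a :: l, b :: m => if a = b then commonPrefixLength l m + 1 else 0
  | _, _ => 0

lemma le_commonPrefixLength_iff {β : Type*} [DecidableEq β] (k : ℕ) (l m : List β) :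
    k ≤ commonPrefixLength l m ↔ k ≤ l.length ∧ k ≤ m.length ∧ l.take k = m.take k := by
  induction l generalizing k m with
  | nil => cases k <;> simp [commonPrefixLength]
  | cons a l ih =>
    cases m with
    | nil => cases k <;> simp [commonPrefixLength]
    | cons b m =>
      cases k with
      | zero => simp
      | succ k =>
        by_cases hab : a = b
        · simp [commonPrefixLength, hab, ih]
        · simp [commonPrefixLength, hab]

/-- The number of letters cancelled in the product `u⁻¹ * v`. -/
def cancellation (u v : FreeGroup α) : ℕ := commonPrefixLength u.toWord v.toWord

lemma le_cancellation_iff (k : ℕ) (u v : FreeGroup α) :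
    k ≤ cancellation u v ↔ k ≤ u.norm ∧ k ≤ v.norm ∧ u.toWord.take k = v.toWord.take k :=
  le_commonPrefixLength_iff k _ _

lemma cancellation_comm (u v : FreeGroup α) : cancellation u v = cancellation v u :=
  eq_of_forall_le_iff fun k => by simp only [le_cancellation_iff, eq_comm]; tauto

lemma min_cancellation_le (u v w : FreeGroup α) :
    min (cancellation u v) (cancellation v w) ≤ cancellation u w := by
  have h₁ := (le_cancellation_iff _ u v).1 (min_le_left _ (cancellation v w))
  have h₂ := (le_cancellation_iff _ v w).1 (min_le_right (cancellation u v) _)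
  exact (le_cancellation_iff _ u w).2 ⟨h₁.1, h₂.2.1, h₁.2.2.trans h₂.2.2⟩

/-- The longest common prefix is what cancels when a reduced word is multiplied by the inverse
of another. -/
lemma norm_inv_mul_mk {l m : List (α × Bool)} (hl : FreeGroup.IsReduced l)
    (hm : FreeGroup.IsReduced m) :
    ((FreeGroup.mk l)⁻¹ * FreeGroup.mk m).norm + 2 * commonPrefixLength l m =
      l.length + m.length := by
  induction l generalizing m with
  | nil =>
    simp [commonPrefixLength, FreeGroup.norm, hm.reduce_eq, ← FreeGroup.one_eq_mk]
  | cons a l ih =>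
    cases m with
    | nil =>
      rw [← FreeGroup.one_eq_mk, mul_one, FreeGroup.norm_inv_eq]
      simp [commonPrefixLength, FreeGroup.norm, hl.reduce_eq]
    | cons b m =>
      by_cases hab : a = b
      · subst hab
        have key : (FreeGroup.mk (a :: l))⁻¹ * FreeGroup.mk (a :: m) =
            (FreeGroup.mk l)⁻¹ * FreeGroup.mk m := by
          rw [← List.singleton_append, ← List.singleton_append (l := m), ← FreeGroup.mul_mk,
            ← FreeGroup.mul_mk]
          group
        have := ih (List.IsChain.tail hl) (List.IsChain.tail hm)
        simp only [List.tail_cons] at this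
        rw [key]
        simp only [commonPrefixLength, if_true, List.length_cons]
        omega
      · have hred : FreeGroup.IsReduced (FreeGroup.invRev (a :: l) ++ b :: m) := by
          have h₁ : FreeGroup.IsReduced (FreeGroup.invRev (a :: l)) := by
            rw [FreeGroup.isReduced_iff_reduce_eq, FreeGroup.reduce_invRev, hl.reduce_eq]
          refine List.IsChain.append h₁ hm ?_
          simp only [FreeGroup.invRev, List.map_cons, List.reverse_cons, List.getLast?_append,
            List.getLast?_singleton, List.head?_cons, Option.mem_def, Option.some.injEq,
            Option.some_or]
          rintro _ rfl _ rfl h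
          by_contra hne
          refine hab (Prod.ext h ?_)
          simpa using hne
        rw [FreeGroup.inv_mk, FreeGroup.mul_mk, FreeGroup.norm, FreeGroup.toWord_mk,
          hred.reduce_eq]
        simp [commonPrefixLength, hab]

lemma norm_inv_mul (u v : FreeGroup α) :
    (u⁻¹ * v).norm + 2 * cancellation u v = u.norm + v.norm := by
  have h := norm_inv_mul_mk (FreeGroup.isReduced_toWord (x := u))
    (FreeGroup.isReduced_toWord (x := v))
  rwa [FreeGroup.mk_toWord, FreeGroup.mk_toWord] at h

lemma norm_mul (u v : FreeGroup α) :
    (u * v).norm + 2 * cancellation u⁻¹ v = u.norm + v.norm := by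
  simpa using norm_inv_mul u⁻¹ v

lemma norm_le_norm_mul_self (w : FreeGroup α) : w.norm ≤ (w * w).norm := by
  have h := FreeGroup.reduceCyclically.reduce_flatten_replicate_succ
    (FreeGroup.isReduced_toWord (x := w)) 1
  have h' := FreeGroup.reduceCyclically.conj_conjugator_reduceCyclically w.toWord
  have e₁ := congrArg List.length h
  have e₂ := congrArg List.length h'
  simp [List.replicate_succ] at e₁ e₂
  rw [FreeGroup.norm, FreeGroup.norm, FreeGroup.toWord_mul]
  omega

lemma toWord_mk_of_norm_eq {l : List (α × Bool)} (h : (FreeGroup.mk l).norm = l.length) :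
    (FreeGroup.mk l).toWord = l := by
  exact (FreeGroup.toWord_mk).trans
    ((FreeGroup.Red.sublist (FreeGroup.reduce.red (L := l))).eq_of_length h)

lemma eq_mul_inv_of_norm_eq {v : FreeGroup α} {m : ℕ} (hv : v.norm = 2 * m) :
    v = FreeGroup.mk (v.toWord.take m) * (FreeGroup.mk (v⁻¹.toWord.take m))⁻¹ := by
  have hvl : v.toWord.length = 2 * m := hv
  have hdrop : v.toWord = v.toWord.take m ++ FreeGroup.invRev (v⁻¹.toWord.take m) := by
    conv_lhs => rw [← List.take_append_drop m v.toWord]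
    rw [FreeGroup.toWord_inv, FreeGroup.invRev, FreeGroup.invRev, List.take_reverse]
    simp [Function.comp_def, hvl, two_mul]
  rw [FreeGroup.inv_mk, FreeGroup.mul_mk, ← hdrop, FreeGroup.mk_toWord]

end Words

section Weight

variable {n : ℕ}

/-- The value of a word read as a number in base `2 * n + 2`. -/
def wordValue (l : List (Fin n × Bool)) : ℕ :=
  Nat.ofDigits (2 * n + 2) (l.map fun a => 2 * (a.1 : ℕ) + a.2.toNat).reverse

lemma wordValue_append (l m : List (Fin n × Bool)) :
    wordValue (l ++ m) = wordValue m + (2 * n + 2) ^ m.length * wordValue l := by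
  simp [wordValue, Nat.ofDigits_append]

lemma eq_of_wordValue_eq {l m : List (Fin n × Bool)} (hlen : l.length = m.length)
    (h : wordValue l = wordValue m) : l = m := by
  have hlt (k : List (Fin n × Bool)) :
      ∀ d ∈ (k.map fun a => 2 * (a.1 : ℕ) + a.2.toNat).reverse, d < 2 * n + 2 := by
    simp only [List.mem_reverse, List.mem_map]
    rintro _ ⟨a, -, rfl⟩
    have := a.2.toNat_le
    omega
  have h' := Nat.ofDigits_inj_of_len_eq (by omega) (by simpa using hlen) (hlt l) (hlt m) h
  refine List.map_injective_iff.2 ?_ (List.reverse_injective h')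
  rintro ⟨a, b⟩ ⟨c, d⟩ hac
  have hb := b.toNat_le
  have hd := d.toNat_le
  simp only at hac
  refine Prod.ext (Fin.ext (by simp only; omega)) ?_
  have : b.toNat = d.toNat := by omega
  revert this
  cases b <;> cases d <;> simp

/-- The sum of the values of the initial halves of a word and of its inverse. -/
def weight (u : FreeGroup (Fin n)) : ℕ :=
  wordValue (u.toWord.take (u.norm / 2)) + wordValue (u⁻¹.toWord.take (u.norm / 2))

lemma weight_inv (u : FreeGroup (Fin n)) : weight u⁻¹ = weight u := by
  simp only [weight, FreeGroup.norm_inv_eq, inv_inv, add_comm]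

/-- Replacing an initial segment of at most half the length by a smaller one decreases the
weight. -/
lemma weight_mk_append_lt {p q b : List (Fin n × Bool)} (hlen : p.length = q.length)
    (hq : q.length ≤ b.length) (hlt : wordValue p < wordValue q)
    (hp : (FreeGroup.mk (p ++ b)).norm = (p ++ b).length)
    (hqb : (FreeGroup.mk (q ++ b)).norm = (q ++ b).length) :
    weight (FreeGroup.mk (p ++ b)) < weight (FreeGroup.mk (q ++ b)) := by
  simp only [weight, hp, hqb, FreeGroup.toWord_inv, toWord_mk_of_norm_eq hp,
    toWord_mk_of_norm_eq hqb, FreeGroup.invRev_append, List.length_append, hlen]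
  have hhalf : (q.length + b.length) / 2 ≤ (FreeGroup.invRev b).length := by
    rw [FreeGroup.invRev_length]; omega
  rw [List.take_append_of_le_length hhalf, List.take_append_of_le_length hhalf,
    List.take_append, List.take_append, List.take_of_length_le (l := p) (by omega),
    List.take_of_length_le (l := q) (by omega), hlen, wordValue_append, wordValue_append]
  gcongr

/-- If exactly half of `v` cancels in `v * w`, and the initial half of `v` is smaller than that
of `v⁻¹`, then multiplication by `v` decreases the weight of `w`. -/
lemma weight_mul_lt {v w : FreeGroup (Fin n)} {m : ℕ} (hv : v.norm = 2 * m)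
    (hw : 2 * m ≤ w.norm) (hc : cancellation v⁻¹ w = m)
    (hlt : wordValue (v.toWord.take m) < wordValue (v⁻¹.toWord.take m)) :
    weight (v * w) < weight w := by
  obtain ⟨-, -, hq⟩ := (le_cancellation_iff m v⁻¹ w).1 hc.ge
  have hnorm := norm_mul v w
  set p := v.toWord.take m with hp
  set q := v⁻¹.toWord.take m with hq'
  set b := w.toWord.drop m with hb
  have hwl : w.toWord.length = w.norm := rfl
  have hvl : v.toWord.length = v.norm := rfl
  have hpl : p.length = m := by simp [hp, hvl, hv]; omega
  have hql : q.length = m := by simp [hq', hvl, hv]; omega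
  have hbl : b.length = w.norm - m := by simp [hb, hwl]
  have hwqb : FreeGroup.mk (q ++ b) = w := by
    rw [hq, hb, List.take_append_drop, FreeGroup.mk_toWord]
  have hvpq : v = FreeGroup.mk p * (FreeGroup.mk q)⁻¹ := eq_mul_inv_of_norm_eq hv
  have hvw : v * w = FreeGroup.mk (p ++ b) := by
    rw [← hwqb, hvpq, ← FreeGroup.mul_mk, ← FreeGroup.mul_mk]
    group
  rw [hvw] at hnorm ⊢
  rw [← hwqb]
  refine weight_mk_append_lt (hpl.trans hql.symm) (by omega) hlt ?_ ?_
  · rw [List.length_append]; omega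
  · rw [hwqb, List.length_append]; omega

end Weight

section Reduced

variable {n : ℕ}

/-- The formal inverse of a letter. -/
def invLetter (a : Fin n × Bool) : Fin n × Bool := (a.1, !a.2)

@[simp]
lemma invLetter_invLetter (a : Fin n × Bool) : invLetter (invLetter a) = a := by
  simp [invLetter]

lemma mk_invLetter (a : Fin n × Bool) :
    FreeGroup.mk [invLetter a] = (FreeGroup.mk [a])⁻¹ := rfl

lemma eq_or_eq_invLetter {a b : Fin n × Bool} (h : a.1 = b.1) : b = a ∨ b = invLetter a := by
  obtain ⟨i, s⟩ := a
  obtain ⟨j, t⟩ := b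
  cases s <;> cases t <;> simp_all [invLetter]

/-- No elementary Nielsen move `b ↦ a * b` makes the images of the generators under `φ` smaller,
with respect to length and then weight. -/
def IsNielsenMinimal (φ : FrAut n) : Prop :=
  ∀ a b : Fin n × Bool, a.1 ≠ b.1 →
    (φ (FreeGroup.mk [b])).norm ≤ (φ (FreeGroup.mk [a]) * φ (FreeGroup.mk [b])).norm ∧
    ((φ (FreeGroup.mk [a]) * φ (FreeGroup.mk [b])).norm = (φ (FreeGroup.mk [b])).norm →
      weight (φ (FreeGroup.mk [b])) ≤ weight (φ (FreeGroup.mk [a]) * φ (FreeGroup.mk [b])))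

lemma norm_map_letter_pos (φ : FrAut n) (a : Fin n × Bool) :
    0 < (φ (FreeGroup.mk [a])).norm := by
  rw [Nat.pos_iff_ne_zero, Ne, FreeGroup.norm_eq_zero, EmbeddingLike.map_eq_one_iff,
    ← FreeGroup.norm_eq_zero]
  simp [FreeGroup.norm]

namespace IsNielsenMinimal

variable {φ : FrAut n}

lemma two_mul_cancellation_le_left (hφ : IsNielsenMinimal φ) {a b : Fin n × Bool}
    (hab : b ≠ invLetter a) :
    2 * cancellation (φ (FreeGroup.mk [a]))⁻¹ (φ (FreeGroup.mk [b])) ≤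
      (φ (FreeGroup.mk [a])).norm := by
  have hle : (φ (FreeGroup.mk [b])).norm ≤
      (φ (FreeGroup.mk [a]) * φ (FreeGroup.mk [b])).norm := by
    by_cases h : a.1 = b.1
    · obtain rfl := (eq_or_eq_invLetter h).resolve_right hab
      exact norm_le_norm_mul_self _
    · exact (hφ a b h).1
  have := norm_mul (φ (FreeGroup.mk [a])) (φ (FreeGroup.mk [b]))
  omega

lemma two_mul_cancellation_le_right (hφ : IsNielsenMinimal φ) {a b : Fin n × Bool}
    (hab : b ≠ invLetter a) :
    2 * cancellation (φ (FreeGroup.mk [a]))⁻¹ (φ (FreeGroup.mk [b])) ≤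
      (φ (FreeGroup.mk [b])).norm := by
  have h := hφ.two_mul_cancellation_le_left (a := invLetter b) (b := invLetter a) (by
    rintro h
    exact hab (by simpa using h.symm))
  simpa [mk_invLetter, cancellation_comm, -FreeGroup.inv_mk] using h

/-- The image of `b` does not lose exactly half of its letters in a product with the image of `d`
when its initial half is smaller than that of its inverse. -/
lemma not_half_cancellation (hφ : IsNielsenMinimal φ) {b d : Fin n × Bool} {m : ℕ}
    (hbd : d ≠ invLetter b) (hb : (φ (FreeGroup.mk [b])).norm = 2 * m)
    (hc : cancellation (φ (FreeGroup.mk [b]))⁻¹ (φ (FreeGroup.mk [d])) = m)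
    (hlt : wordValue ((φ (FreeGroup.mk [b])).toWord.take m) <
      wordValue ((φ (FreeGroup.mk [b]))⁻¹.toWord.take m)) : False := by
  have hd := hφ.two_mul_cancellation_le_right hbd
  have hnorm := norm_mul (φ (FreeGroup.mk [b])) (φ (FreeGroup.mk [d]))
  have hne : b.1 ≠ d.1 := by
    intro h
    obtain rfl := (eq_or_eq_invLetter h).resolve_right hbd
    obtain ⟨-, -, h⟩ := (le_cancellation_iff _ _ _).1 hc.ge
    rw [h] at hlt
    exact lt_irrefl _ hlt
  exact absurd ((hφ b d hne).2 (by omega))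
    (not_le.2 (weight_mul_lt hb (by omega) hc hlt))

/-- A letter survives in the middle of every product of three consecutive letters of a reduced
word. -/
lemma cancellation_add_cancellation_lt (hφ : IsNielsenMinimal φ) {a b d : Fin n × Bool}
    (hab : b ≠ invLetter a) (hbd : d ≠ invLetter b) :
    cancellation (φ (FreeGroup.mk [a]))⁻¹ (φ (FreeGroup.mk [b])) +
      cancellation (φ (FreeGroup.mk [b]))⁻¹ (φ (FreeGroup.mk [d])) <
      (φ (FreeGroup.mk [b])).norm := by
  have h₁ := hφ.two_mul_cancellation_le_right hab
  have h₂ := hφ.two_mul_cancellation_le_left hbd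
  by_contra! hge
  obtain ⟨m, hm⟩ : ∃ m, (φ (FreeGroup.mk [b])).norm = 2 * m :=
    ⟨cancellation (φ (FreeGroup.mk [a]))⁻¹ (φ (FreeGroup.mk [b])), by omega⟩
  rcases lt_trichotomy (wordValue ((φ (FreeGroup.mk [b])).toWord.take m))
    (wordValue ((φ (FreeGroup.mk [b]))⁻¹.toWord.take m)) with hlt | heq | hlt
  · exact hφ.not_half_cancellation hbd hm (by omega) hlt
  · have hpos := norm_map_letter_pos φ b
    have hlen : (φ (FreeGroup.mk [b])).toWord.length = 2 * m := hm
    have heq' := eq_of_wordValue_eq (by simp [hlen]) heq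
    have hone := eq_mul_inv_of_norm_eq hm
    rw [heq', mul_inv_cancel, ← FreeGroup.norm_eq_zero] at hone
    omega
  · refine hφ.not_half_cancellation (b := invLetter b) (d := invLetter a) (m := m) ?_ ?_ ?_ ?_
    · intro h
      exact hab (by simpa using h.symm)
    · rw [mk_invLetter, map_inv, FreeGroup.norm_inv_eq, hm]
    · rw [mk_invLetter, mk_invLetter, map_inv, map_inv, inv_inv, cancellation_comm]
      omega
    · rwa [mk_invLetter, map_inv, inv_inv]

/-- The cancellation between the image of a letter and that of a reduced word only depends on the
first letter of the word, and the remaining part of the image is at least as long as the word. -/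
lemma cancellation_map_mk_cons (hφ : IsNielsenMinimal φ) (l : List (Fin n × Bool))
    (b d : Fin n × Bool) (hl : FreeGroup.IsReduced (b :: d :: l)) :
    cancellation (φ (FreeGroup.mk [b]))⁻¹ (φ (FreeGroup.mk (d :: l))) =
        cancellation (φ (FreeGroup.mk [b]))⁻¹ (φ (FreeGroup.mk [d])) ∧
      cancellation (φ (FreeGroup.mk [b]))⁻¹ (φ (FreeGroup.mk [d])) + (d :: l).length ≤
        (φ (FreeGroup.mk (d :: l))).norm := by
  have ne_of_reduced {x y : Fin n × Bool} {k : List (Fin n × Bool)}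
      (h : FreeGroup.IsReduced (x :: y :: k)) : y ≠ invLetter x := by
    rintro rfl
    simpa [invLetter] using (List.isChain_cons_cons.1 h).1
  have hbd := ne_of_reduced hl
  induction l generalizing b d with
  | nil =>
    have h₁ := hφ.two_mul_cancellation_le_right hbd
    have h₂ := norm_map_letter_pos φ d
    refine ⟨rfl, ?_⟩
    simp only [List.length_singleton]
    omega
  | cons e l ih =>
    have hl' : FreeGroup.IsReduced (d :: e :: l) := List.IsChain.tail hl
    have hde := ne_of_reduced hl'
    obtain ⟨h₁, h₂⟩ := ih d e hl' hde
    have hlt := hφ.cancellation_add_cancellation_lt hbd hde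
    have hP : φ (FreeGroup.mk (d :: e :: l)) =
        φ (FreeGroup.mk [d]) * φ (FreeGroup.mk (e :: l)) := by
      rw [← map_mul, FreeGroup.mul_mk, List.singleton_append]
    have hn₁ := norm_mul (φ (FreeGroup.mk [d])) (φ (FreeGroup.mk (e :: l)))
    have hn₂ := norm_inv_mul (φ (FreeGroup.mk [d])) (φ (FreeGroup.mk (d :: e :: l)))
    rw [← hP] at hn₁
    rw [hP, inv_mul_cancel_left, ← hP] at hn₂
    have hu₁ := min_cancellation_le (φ (FreeGroup.mk [b]))⁻¹ (φ (FreeGroup.mk [d]))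
      (φ (FreeGroup.mk (d :: e :: l)))
    have hu₂ := min_cancellation_le (φ (FreeGroup.mk [b]))⁻¹ (φ (FreeGroup.mk (d :: e :: l)))
      (φ (FreeGroup.mk [d]))
    rw [cancellation_comm (φ (FreeGroup.mk (d :: e :: l))) (φ (FreeGroup.mk [d]))] at hu₂
    simp only [List.length_cons] at h₂ ⊢
    constructor <;> omega

lemma norm_le_norm_map (hφ : IsNielsenMinimal φ) (w : FreeGroup (Fin n)) :
    w.norm ≤ (φ w).norm := by
  rcases hw : w.toWord with - | ⟨d, l⟩
  · simp [FreeGroup.norm, hw]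
  · have hred : FreeGroup.IsReduced (d :: l) := hw ▸ FreeGroup.isReduced_toWord
    have h := (hφ.cancellation_map_mk_cons l d d
      (List.isChain_cons_cons.2 ⟨fun _ => rfl, hred⟩)).2
    rw [← hw, FreeGroup.mk_toWord] at h
    exact le_trans (Nat.le_add_left _ _) h

end IsNielsenMinimal

end Reduced

section Automorphisms

variable {n : ℕ}

lemma of_eq_mk (i : Fin n) : FreeGroup.of i = FreeGroup.mk [(i, true)] := rfl

lemma hom_ext_letter {f g : FreeGroup (Fin n) →* FreeGroup (Fin n)} (b : Fin n × Bool)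
    (hb : f (FreeGroup.mk [b]) = g (FreeGroup.mk [b]))
    (h : ∀ k, k ≠ b.1 → f (FreeGroup.of k) = g (FreeGroup.of k)) : f = g := by
  refine FreeGroup.ext_hom _ _ fun k => ?_
  by_cases hk : k = b.1
  · rcases eq_or_eq_invLetter (a := b) (b := (k, true)) hk.symm with h' | h'
    · rw [of_eq_mk, h', hb]
    · rw [of_eq_mk, h', mk_invLetter, map_inv, map_inv, hb]
  · exact h k hk

lemma aut_ext_letter {f g : FrAut n} (b : Fin n × Bool)
    (hb : f (FreeGroup.mk [b]) = g (FreeGroup.mk [b]))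
    (h : ∀ k, k ≠ b.1 → f (FreeGroup.of k) = g (FreeGroup.of k)) : f = g :=
  MulEquiv.toMonoidHom_injective
    (hom_ext_letter (f := f.toMonoidHom) (g := g.toMonoidHom) b hb h)

lemma aut_ext {f g : FrAut n} (h : ∀ k, f (FreeGroup.of k) = g (FreeGroup.of k)) : f = g :=
  MulEquiv.toMonoidHom_injective
    (FreeGroup.ext_hom f.toMonoidHom g.toMonoidHom h)

/-- The endomorphism sending the letter `b` to `a * b` and fixing the generators other than the
one underlying `b`. -/
def transvectionHom (a b : Fin n × Bool) : FreeGroup (Fin n) →* FreeGroup (Fin n) :=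
  FreeGroup.lift fun k =>
    if k = b.1 then
      if b.2 then FreeGroup.mk [a] * FreeGroup.of k else FreeGroup.of k * (FreeGroup.mk [a])⁻¹
    else FreeGroup.of k

lemma transvectionHom_self (a b : Fin n × Bool) :
    transvectionHom a b (FreeGroup.mk [b]) = FreeGroup.mk [a] * FreeGroup.mk [b] := by
  obtain ⟨i, s⟩ := b
  cases s
  · rw [show FreeGroup.mk [(i, false)] = (FreeGroup.of i)⁻¹ from rfl, map_inv, transvectionHom,
      FreeGroup.lift_apply_of]
    simp only [if_true, Bool.false_eq_true, if_false, _root_.mul_inv_rev, inv_inv]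
  · rw [← of_eq_mk, transvectionHom, FreeGroup.lift_apply_of]
    simp only [if_true]

lemma transvectionHom_of_ne (a : Fin n × Bool) {b : Fin n × Bool} {k : Fin n} (h : k ≠ b.1) :
    transvectionHom a b (FreeGroup.of k) = FreeGroup.of k := by
  rw [transvectionHom, FreeGroup.lift_apply_of, if_neg h]

lemma transvectionHom_letter_of_ne (a : Fin n × Bool) {b c : Fin n × Bool} (h : c.1 ≠ b.1) :
    transvectionHom a b (FreeGroup.mk [c]) = FreeGroup.mk [c] := by
  rcases eq_or_eq_invLetter (a := (c.1, true)) (b := c) rfl with h' | h' <;> rw [h']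
  · exact transvectionHom_of_ne a h
  · rw [mk_invLetter, map_inv]
    exact congrArg _ (transvectionHom_of_ne a h)

lemma transvectionHom_invLetter_comp {a b : Fin n × Bool} (h : a.1 ≠ b.1) :
    (transvectionHom (invLetter a) b).comp (transvectionHom a b) = MonoidHom.id _ := by
  refine hom_ext_letter b ?_ fun k hk => ?_
  · rw [MonoidHom.comp_apply, transvectionHom_self, map_mul, transvectionHom_self,
      transvectionHom_letter_of_ne _ h, mk_invLetter, mul_inv_cancel_left, MonoidHom.id_apply]
  · rw [MonoidHom.comp_apply, transvectionHom_of_ne _ hk, transvectionHom_of_ne _ hk,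
      MonoidHom.id_apply]

/-- The Nielsen transvection sending the letter `b` to `a * b` and fixing the generators other than
the one underlying `b`. -/
def transvectionAut (a b : Fin n × Bool) (h : a.1 ≠ b.1) : FrAut n :=
  MonoidHom.toMulEquiv (transvectionHom a b) (transvectionHom (invLetter a) b)
    (transvectionHom_invLetter_comp h)
    (by simpa using transvectionHom_invLetter_comp (a := invLetter a) (b := b) h)

section

variable {a b : Fin n × Bool} (h : a.1 ≠ b.1)

lemma transvectionAut_self :
    transvectionAut a b h (FreeGroup.mk [b]) = FreeGroup.mk [a] * FreeGroup.mk [b] :=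
  transvectionHom_self a b

lemma transvectionAut_of_ne {k : Fin n} (hk : k ≠ b.1) :
    transvectionAut a b h (FreeGroup.of k) = FreeGroup.of k :=
  transvectionHom_of_ne a hk

lemma transvectionAut_letter_of_ne {c : Fin n × Bool} (hc : c.1 ≠ b.1) :
    transvectionAut a b h (FreeGroup.mk [c]) = FreeGroup.mk [c] :=
  transvectionHom_letter_of_ne a hc

end

/-- The action on letters of the permutation `π` of the generators with signs `s`. -/
def signedLetter (π : Equiv.Perm (Fin n)) (s : Fin n → Bool) (a : Fin n × Bool) : Fin n × Bool :=
  (π a.1, s a.1 == a.2)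

/-- The endomorphism sending the `k`-th generator to the `π k`-th one or its inverse, according to
the sign `s k`. -/
def signedPermHom (π : Equiv.Perm (Fin n)) (s : Fin n → Bool) :
    FreeGroup (Fin n) →* FreeGroup (Fin n) :=
  FreeGroup.lift fun k => FreeGroup.mk [(π k, s k)]

lemma signedPermHom_letter (π : Equiv.Perm (Fin n)) (s : Fin n → Bool) (a : Fin n × Bool) :
    signedPermHom π s (FreeGroup.mk [a]) = FreeGroup.mk [signedLetter π s a] := by
  obtain ⟨i, t⟩ := a
  cases t
  · rw [show FreeGroup.mk [(i, false)] = (FreeGroup.of i)⁻¹ from rfl, map_inv, signedPermHom,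
      FreeGroup.lift_apply_of]
    simp [signedLetter, FreeGroup.invRev]
  · rw [← of_eq_mk, signedPermHom, FreeGroup.lift_apply_of]
    simp [signedLetter]

lemma signedLetter_signedLetter (π π' : Equiv.Perm (Fin n)) (s s' : Fin n → Bool)
    (a : Fin n × Bool) : signedLetter π s (signedLetter π' s' a) =
      signedLetter (π * π') (fun k => s (π' k) == s' k) a := by
  simp only [signedLetter, Equiv.Perm.mul_apply, Prod.mk.injEq, true_and]
  cases s (π' a.1) <;> cases s' a.1 <;> cases a.2 <;> rfl

lemma signedLetter_fst_ne (π : Equiv.Perm (Fin n)) (s : Fin n → Bool) {a b : Fin n × Bool}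
    (h : a.1 ≠ b.1) : (signedLetter π s a).1 ≠ (signedLetter π s b).1 :=
  π.injective.ne h

lemma signedPermHom_comp (π π' : Equiv.Perm (Fin n)) (s s' : Fin n → Bool) :
    (signedPermHom π s).comp (signedPermHom π' s') =
      signedPermHom (π * π') (fun k => s (π' k) == s' k) := by
  refine FreeGroup.ext_hom _ _ fun k => ?_
  rw [MonoidHom.comp_apply, of_eq_mk, signedPermHom_letter, signedPermHom_letter,
    signedPermHom_letter, signedLetter_signedLetter]

lemma signedPermHom_one : signedPermHom (1 : Equiv.Perm (Fin n)) (fun _ => true) =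
    MonoidHom.id _ :=
  FreeGroup.ext_hom _ _ fun k => by simp [signedPermHom, of_eq_mk]

/-- The automorphism sending the `k`-th generator to the `π k`-th one or its inverse, according to
the sign `s k`. -/
def signedPerm (π : Equiv.Perm (Fin n)) (s : Fin n → Bool) : FrAut n :=
  MonoidHom.toMulEquiv (signedPermHom π s) (signedPermHom π⁻¹ fun k => s (π⁻¹ k))
    (by rw [signedPermHom_comp, ← signedPermHom_one]; congr 1 <;> simp)
    (by rw [signedPermHom_comp, ← signedPermHom_one]; congr 1 <;> simp)

lemma signedPerm_letter (π : Equiv.Perm (Fin n)) (s : Fin n → Bool) (a : Fin n × Bool) :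
    signedPerm π s (FreeGroup.mk [a]) = FreeGroup.mk [signedLetter π s a] :=
  signedPermHom_letter π s a

lemma signedPerm_of (π : Equiv.Perm (Fin n)) (s : Fin n → Bool) (k : Fin n) :
    signedPerm π s (FreeGroup.of k) = FreeGroup.mk [(π k, s k)] :=
  FreeGroup.lift_apply_of (f := fun k => FreeGroup.mk [(π k, s k)])

lemma signedPerm_mul (π π' : Equiv.Perm (Fin n)) (s s' : Fin n → Bool) :
    signedPerm π s * signedPerm π' s' =
      signedPerm (π * π') (fun k => s (π' k) == s' k) :=
  MulEquiv.toMonoidHom_injective (signedPermHom_comp π π' s s')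

lemma signedPerm_one : signedPerm (1 : Equiv.Perm (Fin n)) (fun _ => true) = 1 :=
  MulEquiv.toMonoidHom_injective signedPermHom_one

/-- The automorphism inverting the `i`-th generator. -/
def inversion (i : Fin n) : FrAut n := signedPerm 1 fun k => decide (k ≠ i)

lemma inversion_mul_self (i : Fin n) : inversion i * inversion i = 1 := by
  rw [inversion, signedPerm_mul, ← signedPerm_one]
  congr 1
  funext k
  exact beq_self_eq_true _

lemma signedPerm_mul_transvectionAut (π : Equiv.Perm (Fin n)) (s : Fin n → Bool)
    {a b : Fin n × Bool} (h : a.1 ≠ b.1) :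
    signedPerm π s * transvectionAut a b h =
      transvectionAut (signedLetter π s a) (signedLetter π s b) (signedLetter_fst_ne π s h) *
        signedPerm π s := by
  refine aut_ext_letter b ?_ fun k hk => ?_
  · rw [MulAut.mul_apply, MulAut.mul_apply, transvectionAut_self, map_mul, signedPerm_letter,
      signedPerm_letter, transvectionAut_self]
  · rw [MulAut.mul_apply, MulAut.mul_apply, transvectionAut_of_ne _ hk, signedPerm_of,
      transvectionAut_letter_of_ne (c := (π k, s k)) _ (π.injective.ne hk)]

lemma exists_signedLetter_eq {a b c d : Fin n × Bool} (hab : a.1 ≠ b.1) (hcd : c.1 ≠ d.1) :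
    ∃ π s, signedLetter π s a = c ∧ signedLetter π s b = d := by
  obtain ⟨π, hπa, hπb⟩ : ∃ π : Equiv.Perm (Fin n), π a.1 = c.1 ∧ π b.1 = d.1 := by
    refine ⟨Equiv.swap (Equiv.swap a.1 c.1 b.1) d.1 * Equiv.swap a.1 c.1, ?_, ?_⟩
    · rw [Equiv.Perm.mul_apply, Equiv.swap_apply_left, Equiv.swap_apply_of_ne_of_ne _ hcd]
      intro h
      exact hab ((Equiv.swap a.1 c.1).injective (by rw [Equiv.swap_apply_left, ← h]))
    · rw [Equiv.Perm.mul_apply, Equiv.swap_apply_left]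
  refine ⟨π, fun k => if k = a.1 then (c.2 == a.2) else (d.2 == b.2), ?_, ?_⟩
  · simp [signedLetter, hπa]
  · simp [signedLetter, hπb, hab.symm]

/-- A normal subgroup containing one transvection contains all of them. -/
lemma transvectionAut_mem_of_normal {N : Subgroup (FrAut n)} [hN : N.Normal]
    {a b : Fin n × Bool} {h : a.1 ≠ b.1} (hmem : transvectionAut a b h ∈ N)
    {c d : Fin n × Bool} (h' : c.1 ≠ d.1) : transvectionAut c d h' ∈ N := by
  obtain ⟨π, s, rfl, rfl⟩ := exists_signedLetter_eq h h'
  have := hN.conj_mem _ hmem (signedPerm π s)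
  rwa [signedPerm_mul_transvectionAut, mul_inv_cancel_right] at this

/-- A product of three transvections interchanges two generators up to inverting one of them. -/
lemma transvectionAut_mul_mul {i j : Fin n} (h : i ≠ j) :
    transvectionAut (i, true) (j, true) h * transvectionAut (j, false) (i, true) h.symm *
      transvectionAut (i, false) (j, false) h =
      signedPerm (Equiv.swap i j) (fun _ => true) * inversion i := by
  have inv_of (k : Fin n) : FreeGroup.mk [(k, false)] = (FreeGroup.of k)⁻¹ := rfl
  have e₁ := transvectionAut_self (a := (i, true)) (b := (j, true)) h
  have e₂ := transvectionAut_self (a := (j, false)) (b := (i, true)) h.symm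
  have e₃ := transvectionAut_self (a := (i, false)) (b := (j, false)) h
  simp only [inv_of, ← of_eq_mk, map_inv] at e₁ e₂ e₃
  replace e₃ := congrArg (·⁻¹) e₃
  simp only [inv_inv, _root_.mul_inv_rev] at e₃
  refine aut_ext fun k => ?_
  rw [inversion, signedPerm_mul, signedPerm_of]
  simp only [MulAut.mul_apply]
  by_cases hki : k = i
  · subst hki
    rw [transvectionAut_of_ne (b := (j, false)) _ h, e₂, map_mul, map_inv, e₁,
      transvectionAut_of_ne (b := (j, true)) _ h]
    simp [inv_of]
  · by_cases hkj : k = j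
    · subst hkj
      rw [e₃, map_mul, e₂, transvectionAut_of_ne (b := (i, true)) _ hki, mul_inv_cancel_left,
        transvectionAut_of_ne (b := (k, true)) _ h]
      simp [hki, of_eq_mk]
    · rw [transvectionAut_of_ne (b := (j, false)) _ hkj,
        transvectionAut_of_ne (b := (i, true)) _ hki,
        transvectionAut_of_ne (b := (j, true)) _ hkj]
      simp [hki, of_eq_mk, Equiv.swap_apply_of_ne_of_ne hki hkj]

end Automorphisms

section Nielsen

variable {n : ℕ}

/-- The total length and total weight of the images of the generators under an automorphism,
compared lexicographically. -/
def complexity (φ : FrAut n) : ℕ ×ₗ ℕ :=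
  toLex (∑ k, (φ (FreeGroup.of k)).norm, ∑ k, weight (φ (FreeGroup.of k)))

lemma exists_complexity_lt {φ : FrAut n} (hφ : ¬ IsNielsenMinimal φ) :
    ∃ (a b : Fin n × Bool) (h : a.1 ≠ b.1),
      complexity (φ * transvectionAut a b h) < complexity φ := by
  simp only [IsNielsenMinimal, not_forall] at hφ
  obtain ⟨a, b, h, hab⟩ := hφ
  refine ⟨a, b, h, ?_⟩
  have apply_of_ne {k : Fin n} (hk : k ≠ b.1) :
      (φ * transvectionAut a b h) (FreeGroup.of k) = φ (FreeGroup.of k) := by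
    rw [MulAut.mul_apply, transvectionAut_of_ne h hk]
  have apply_self {f : FreeGroup (Fin n) → ℕ} (hf : ∀ u, f u⁻¹ = f u) (ψ : FrAut n) :
      f (ψ (FreeGroup.of b.1)) = f (ψ (FreeGroup.mk [b])) := by
    rcases eq_or_eq_invLetter (a := b) (b := (b.1, true)) rfl with h' | h'
    · rw [of_eq_mk, h']
    · rw [of_eq_mk, h', mk_invLetter, map_inv, hf]
  have apply_letter : (φ * transvectionAut a b h) (FreeGroup.mk [b]) =
      φ (FreeGroup.mk [a]) * φ (FreeGroup.mk [b]) := by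
    rw [MulAut.mul_apply, transvectionAut_self, map_mul]
  have sum_lt {f : FreeGroup (Fin n) → ℕ} (hf : ∀ u, f u⁻¹ = f u)
      (hlt : f (φ (FreeGroup.mk [a]) * φ (FreeGroup.mk [b])) < f (φ (FreeGroup.mk [b]))) :
      ∑ k, f ((φ * transvectionAut a b h) (FreeGroup.of k)) < ∑ k, f (φ (FreeGroup.of k)) := by
    have hlt' : f ((φ * transvectionAut a b h) (FreeGroup.of b.1)) < f (φ (FreeGroup.of b.1)) := by
      rwa [apply_self hf, apply_self hf, apply_letter]
    refine Finset.sum_lt_sum (fun k _ => ?_) ⟨b.1, Finset.mem_univ _, hlt'⟩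
    by_cases hk : k = b.1
    · exact hk ▸ hlt'.le
    · rw [apply_of_ne hk]
  have hnorm_inv (u : FreeGroup (Fin n)) : u⁻¹.norm = u.norm := FreeGroup.norm_inv_eq
  simp only [complexity, Prod.Lex.toLex_lt_toLex]
  by_cases hle : (φ (FreeGroup.mk [b])).norm ≤ (φ (FreeGroup.mk [a]) * φ (FreeGroup.mk [b])).norm
  · obtain ⟨heq, hlt⟩ : (φ (FreeGroup.mk [a]) * φ (FreeGroup.mk [b])).norm =
        (φ (FreeGroup.mk [b])).norm ∧
        weight (φ (FreeGroup.mk [a]) * φ (FreeGroup.mk [b])) <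
          weight (φ (FreeGroup.mk [b])) := by
      simpa [hle, -FreeGroup.inv_mk] using hab
    refine Or.inr ⟨Finset.sum_congr rfl fun k _ => ?_, sum_lt weight_inv hlt⟩
    by_cases hk : k = b.1
    · rw [hk, apply_self hnorm_inv, apply_self hnorm_inv, apply_letter, heq]
    · rw [apply_of_ne hk]
  · exact Or.inl (sum_lt hnorm_inv (not_le.1 hle))

/-- An automorphism mapping generators to letters is a signed permutation. -/
lemma exists_eq_signedPerm {ψ : FrAut n} (h : ∀ k, ∃ a, ψ (FreeGroup.of k) = FreeGroup.mk [a]) :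
    ∃ π s, ψ = signedPerm π s := by
  choose l hl using h
  have hinj : Function.Injective fun k => (l k).1 := by
    intro i j hij
    rcases eq_or_eq_invLetter hij with h' | h'
    · exact FreeGroup.of_injective (ψ.injective (by rw [hl, hl, h']))
    · have : FreeGroup.of j = (FreeGroup.of i)⁻¹ :=
        ψ.injective (by rw [map_inv, hl, hl, h', mk_invLetter])
      simpa [FreeGroup.invRev] using congrArg FreeGroup.toWord this
  refine ⟨Equiv.ofBijective _ (Finite.injective_iff_bijective.1 hinj), fun k => (l k).2,
    aut_ext fun k => ?_⟩
  rw [hl, signedPerm_of]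
  rfl

lemma IsNielsenMinimal.exists_inv_eq_signedPerm {φ : FrAut n} (hφ : IsNielsenMinimal φ) :
    ∃ π s, φ⁻¹ = signedPerm π s := by
  refine exists_eq_signedPerm fun k => ?_
  have hle := hφ.norm_le_norm_map (φ⁻¹ (FreeGroup.of k))
  rw [MulAut.apply_inv_self, FreeGroup.norm_of] at hle
  have hne : (φ⁻¹ (FreeGroup.of k)).norm ≠ 0 := by
    rw [Ne, FreeGroup.norm_eq_zero, EmbeddingLike.map_eq_one_iff]
    exact FreeGroup.of_ne_one k
  obtain ⟨a, ha⟩ := List.length_eq_one_iff.1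
    (show (φ⁻¹ (FreeGroup.of k)).toWord.length = 1 from
      le_antisymm hle (Nat.one_le_iff_ne_zero.2 hne))
  exact ⟨a, by rw [← ha, FreeGroup.mk_toWord]⟩

lemma signedPerm_mem {H : Subgroup (FrAut n)}
    (hT : ∀ (a b : Fin n × Bool) (h : a.1 ≠ b.1), transvectionAut a b h ∈ H)
    (hI : ∀ i, inversion i ∈ H) (π : Equiv.Perm (Fin n)) (s : Fin n → Bool) :
    signedPerm π s ∈ H := by
  induction π using Equiv.Perm.swap_induction_on with
  | one =>
    have key (S : Finset (Fin n)) : signedPerm 1 (fun k => decide (k ∉ S)) ∈ H := by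
      induction S using Finset.induction_on with
      | empty => simp [signedPerm_one]
      | insert i S hi ih =>
        convert H.mul_mem (hI i) ih using 1
        rw [inversion, signedPerm_mul]
        congr 1
        funext k
        by_cases hk : k = i
        · subst hk
          simp [hi]
        · simp [hk]
    convert key (Finset.univ.filter fun k => s k = false) using 2
    funext k
    simp
  | swap_mul π i j hij ih =>
    have hswap : signedPerm (Equiv.swap i j) (fun _ => true) ∈ H := by
      rw [← H.mul_mem_cancel_right (hI i), ← transvectionAut_mul_mul hij]
      exact H.mul_mem (H.mul_mem (hT _ _ _) (hT _ _ _)) (hT _ _ _)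
    convert H.mul_mem hswap ih using 1
    rw [signedPerm_mul]
    simp

/-- **Nielsen's theorem**: transvections and inversions generate the automorphism group of a free
group of finite rank. -/
theorem eq_top_of_transvectionAut_mem {H : Subgroup (FrAut n)}
    (hT : ∀ (a b : Fin n × Bool) (h : a.1 ≠ b.1), transvectionAut a b h ∈ H)
    (hI : ∀ i, inversion i ∈ H) : H = ⊤ := by
  refine (Subgroup.eq_top_iff' H).2 fun φ => ?_
  induction hc : complexity φ using WellFoundedLT.induction generalizing φ with
  | _ c ih =>
    by_cases hφ : IsNielsenMinimal φ
    · obtain ⟨π, s, hπ⟩ := hφ.exists_inv_eq_signedPerm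
      rw [← H.inv_mem_iff, hπ]
      exact signedPerm_mem hT hI π s
    · obtain ⟨a, b, h, hlt⟩ := exists_complexity_lt hφ
      exact (H.mul_mem_cancel_right (hT a b h)).1 (ih _ (hc ▸ hlt) _ rfl)

end Nielsen

section Determinant

variable {n : ℕ}

lemma detρ_eq (g : FrAut n) : (detρ n g : ℤ) = (mat g).det := rfl

lemma detρ_inversion (i : Fin n) : detρ n (inversion i) = -1 := by
  refine Units.ext ?_
  have hmat : mat (inversion i) = Matrix.diagonal (Function.update 1 i (-1)) := by
    ext k l
    rw [mat, Matrix.of_apply, inversion, signedPerm_of]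
    by_cases hl : l = i
    · subst hl
      by_cases hk : k = l
      · subst hk
        simp [expSum]
      · simp [expSum, hk, Ne.symm hk]
    · by_cases hk : k = l
      · subst hk
        simp [expSum, hl]
      · simp [expSum, hl, hk, Ne.symm hk]
  rw [detρ_eq, hmat, Matrix.det_diagonal, Finset.prod_update_of_mem (Finset.mem_univ i)]
  simp

lemma detρ_transvectionAut {i j : Fin n} (h : j ≠ i) :
    detρ n (transvectionAut (j, true) (i, true) h) = 1 := by
  refine Units.ext ?_
  have hmat : mat (transvectionAut (j, true) (i, true) h) = Matrix.transvection j i 1 := by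
    ext k l
    rw [mat, Matrix.of_apply, Matrix.transvection, Matrix.add_apply, Matrix.one_apply,
      Matrix.single_apply]
    by_cases hl : l = i
    · subst hl
      rw [of_eq_mk, transvectionAut_self, ← of_eq_mk, ← of_eq_mk, map_mul]
      simp [expSum, add_comm, eq_comm]
    · rw [transvectionAut_of_ne (b := (i, true)) _ hl]
      simp [expSum, Ne.symm hl, eq_comm]
  rw [detρ_eq, hmat, Matrix.det_transvection_of_ne j i h]
  simp

/-- The special automorphism group lies in the normal closure of any transvection between
generators. -/
lemma SAut_le_normalClosure {i j : Fin n} (h : j ≠ i) :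
    SAut n ≤ Subgroup.normalClosure {transvectionAut (j, true) (i, true) h} := by
  set N := Subgroup.normalClosure {transvectionAut (j, true) (i, true) h}
  have hT (a b : Fin n × Bool) (h' : a.1 ≠ b.1) : transvectionAut a b h' ∈ N :=
    transvectionAut_mem_of_normal
      (Subgroup.subset_normalClosure (Set.mem_singleton _)) h'
  have hNdet : N ≤ SAut n :=
    Subgroup.normalClosure_le_normal (N := (detρ n).ker)
      (Set.singleton_subset_iff.2 (detρ_transvectionAut h))
  have hswap {k l : Fin n} (hkl : k ≠ l) :
      signedPerm (Equiv.swap k l) (fun _ => true) * inversion k ∈ N := by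
    rw [← transvectionAut_mul_mul hkl]
    exact N.mul_mem (N.mul_mem (hT _ _ _) (hT _ _ _)) (hT _ _ _)
  have htop : N ⊔ Subgroup.zpowers (inversion i) = ⊤ := by
    have hi : inversion i ∈ N ⊔ Subgroup.zpowers (inversion i) :=
      Subgroup.mem_sup_right (Subgroup.mem_zpowers _)
    refine eq_top_of_transvectionAut_mem
      (fun a b h' => Subgroup.mem_sup_left (hT a b h')) fun k => ?_
    by_cases hk : k = i
    · rwa [hk]
    · have h₁ := (Subgroup.mul_mem_cancel_right _ hi).1
        (Subgroup.mem_sup_left (hswap (Ne.symm hk)))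
      have h₂ := hswap hk
      rw [Equiv.swap_comm] at h₂
      exact (Subgroup.mul_mem_cancel_left _ h₁).1 (Subgroup.mem_sup_left h₂)
  intro g hg
  obtain ⟨y, hy, z, hz, rfl⟩ :=
    Subgroup.mem_sup_of_normal_left.1 (htop ▸ Subgroup.mem_top g)
  obtain ⟨m, rfl⟩ := Subgroup.mem_zpowers_iff.1 hz
  have hdet : detρ n (inversion i ^ m) = 1 := ((SAut n).mul_mem_cancel_left (hNdet hy)).1 hg
  rcases Int.even_or_odd' m with ⟨c, rfl | rfl⟩
  · rwa [_root_.zpow_mul, zpow_two, inversion_mul_self, _root_.one_zpow, mul_one]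
  · rw [_root_.zpow_add_one, _root_.zpow_mul, zpow_two, inversion_mul_self, _root_.one_zpow, one_mul,
      detρ_inversion] at hdet
    exact absurd hdet (by decide)

end Determinant

/-- **Lemma 3.4.** For `n ≥ 3` and `f ∈ Out(F_n)`, if the image in `Out(F_n)` of some left
multiplication `L_{x_i x_j}` (with `i ≠ j`) lies in the normal closure `N(f)`, then
`N(f) = SOut(F_n)` if `det ρ̄(f) = 1` and `N(f) = Out(F_n)` if `det ρ̄(f) = -1`. -/
theorem normalClosure_of_left_multiplication_out (n : ℕ) (hn : 3 ≤ n) (f : OutF n)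
    (h : ∃ i j : Fin n, i ≠ j ∧ ∃ L : FrAut n,
      L (FreeGroup.of i) = FreeGroup.of j * FreeGroup.of i ∧
      (∀ k, k ≠ i → L (FreeGroup.of k) = FreeGroup.of k) ∧
      toOut n L ∈ Subgroup.normalClosure {f}) :
    (detρOut n f = 1 → Subgroup.normalClosure {f} = SOut n) ∧
    (detρOut n f = -1 → Subgroup.normalClosure {f} = ⊤) := by
  obtain ⟨i, j, hij, L, hLi, hLk, hL⟩ := h
  obtain rfl : L = transvectionAut (j, true) (i, true) hij.symm :=
    aut_ext_letter (i, true) (hLi.trans (transvectionAut_self hij.symm).symm)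
      fun k hk => (hLk k hk).trans (transvectionAut_of_ne (b := (i, true)) hij.symm hk).symm
  have hcomap : SAut n ≤ (Subgroup.normalClosure {f}).comap (toOut n) :=
    (SAut_le_normalClosure hij.symm).trans
      (Subgroup.normalClosure_le_normal (Set.singleton_subset_iff.2 hL))
  have hle : SOut n ≤ Subgroup.normalClosure {f} := by
    intro g hg
    obtain ⟨g, rfl⟩ := QuotientGroup.mk'_surjective (Inn n) g
    exact hcomap hg
  refine ⟨fun hf => le_antisymm (Subgroup.normalClosure_le_normal (N := (detρOut n).ker)
    (Set.singleton_subset_iff.2 hf)) hle, fun hf => (Subgroup.eq_top_iff' _).2 fun g => ?_⟩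
  have hfmem : f ∈ Subgroup.normalClosure {f} :=
    Subgroup.subset_normalClosure (Set.mem_singleton f)
  rcases Int.units_eq_one_or (detρOut n g) with hg | hg
  · exact hle hg
  · refine (Subgroup.mul_mem_cancel_right _ hfmem).1 (hle ?_)
    rw [SOut, MonoidHom.mem_ker, map_mul, hg, hf]
    rfl

end NormalClosurePaper
end

section
/- Let n ≥ 3 with n ≠ 4, and let f ∈ Aut(F_n). Assume: (1) IA_n ⊆ N(f); (2) Γ_n(4) ⊆ ρ(N(f)); (3) the image of ρ(N(f)) ∩ SL_n(ℤ) under the reduction map SL_n(ℤ) → SL_n(ℤ/2ℤ) is nontrivial. Then N(f) = SAut(F_n) if det(f̄) = 1, and N(f) = Aut(F_n) if det(f̄) = −1. -/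
open Matrix

namespace NormalClosurePaper

/-- The inclusion `SL_n(ℤ) → GL_n(ℤ)`. -/
def toGLZ (n : ℕ) : Matrix.SpecialLinearGroup (Fin n) ℤ →* GL (Fin n) ℤ :=
  Matrix.SpecialLinearGroup.toGL

section SpecialLinear

open Matrix.SpecialLinearGroup

variable {ι : Type*} [Fintype ι] [DecidableEq ι]

open scoped commutatorElement in
lemma transvection_commutator {R : Type*} [CommRing R] {i j k : ι} (hik : i ≠ k) (hkj : k ≠ j)
    (hij : i ≠ j) (c : R) :
    ⁅transvection hik c, transvection hkj (1 : R)⁆ = transvection hij c := by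
  rw [commutatorElement_def, transvection_inv, transvection_inv]
  ext a b
  simp [transvection_coe, mul_add, add_mul, hik.symm, hkj.symm, hij.symm, ← single_neg,
    single_mul_single_of_ne]
  abel

open scoped commutatorElement in
lemma transvection_mem_commutator_of_three_le_card {R : Type*} [CommRing R]
    (hι : 3 ≤ Fintype.card ι) {i j : ι} (hij : i ≠ j) (c : R) :
    transvection hij c ∈ commutator (SpecialLinearGroup ι R) := by
  obtain ⟨k, hk⟩ : ∃ k, k ∉ ({i, j} : Finset ι) := by
    by_contra! h
    have := Finset.card_le_card (fun x _ => h x : (Finset.univ : Finset ι) ⊆ {i, j})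
    have := Finset.card_le_two (a := i) (b := j)
    rw [Finset.card_univ] at *
    omega
  simp only [Finset.mem_insert, Finset.mem_singleton, not_or] at hk
  rw [← transvection_commutator (Ne.symm hk.1) hk.2 hij c]
  exact Subgroup.commutator_mem_commutator (Subgroup.mem_top _) (Subgroup.mem_top _)

lemma map_transvection {R S : Type*} [CommRing R] [CommRing S] (φ : R →+* S) {i j : ι}
    (hij : i ≠ j) (c : R) :
    SpecialLinearGroup.map φ (transvection hij c) = transvection hij (φ c) := by
  ext a b
  simp only [map_apply_coe, transvection_coe, map_add, map_one, RingHom.mapMatrix_apply,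
    map_single]

lemma eq_top_of_transvection_mem_zmod_two [Nontrivial ι]
    {H : Subgroup (SpecialLinearGroup ι (ZMod 2))}
    (hH : ∀ (i j : ι) (hij : i ≠ j) (c : ZMod 2), transvection hij c ∈ H) : H = ⊤ := by
  refine eq_top_iff.2 fun M _ => diagonal_transvection_induction' (· ∈ H) M ?_ hH
    fun _ _ => mul_mem
  intro i j hij c hc
  obtain rfl : c = 1 := by revert c; decide
  convert H.one_mem
  ext a b
  simp [diag2n_coe]

open scoped LinearAlgebra.Projectivization in
/-- The Iwasawa structure of `SL` over the field with two elements acting on its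
projective space. -/
noncomputable def iwasawaZModTwo [Nontrivial ι] :
    MulAction.IwasawaStructure (SpecialLinearGroup ι (ZMod 2)) (ℙ (ZMod 2) (ι → ZMod 2)) where
  T p := lineStab p.submodule
  is_comm p := by
    rw [← Projectivization.mk_rep p, Projectivization.submodule_mk]
    exact lineStab_isMulCommutative_of_span p.rep p.rep_nonzero
  is_conj g p := by rw [PSL.smul_submodule, lineStab_smul]
  is_generator := eq_top_of_transvection_mem_zmod_two fun i j hij c => by
    have h0 : (Pi.single i 1 : ι → ZMod 2) ≠ 0 := Pi.single_ne_zero_iff.2 one_ne_zero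
    refine Subgroup.mem_iSup_of_mem (Projectivization.mk (ZMod 2) (Pi.single i 1) h0) ?_
    rw [Projectivization.submodule_mk]
    exact SL2Gen.transvection_mem_lineStab hij c

open scoped LinearAlgebra.Projectivization in
lemma eq_top_of_normal_zmod_two (hι : 3 ≤ Fintype.card ι)
    (N : Subgroup (SpecialLinearGroup ι (ZMod 2))) [N.Normal] (hN : N ≠ ⊥) : N = ⊤ := by
  have : Nontrivial ι := Fintype.one_lt_card_iff_nontrivial.1 (by omega)
  have hperf : commutator (SpecialLinearGroup ι (ZMod 2)) = ⊤ :=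
    eq_top_of_transvection_mem_zmod_two fun i j hij c =>
      transvection_mem_commutator_of_three_le_card hι hij c
  refine eq_top_iff.2 (hperf ▸ iwasawaZModTwo.commutator_le N fun hfix => hN ?_)
  refine (Subgroup.eq_bot_iff_forall N).2 fun g hg => ?_
  have hc : g ∈ Subgroup.center (SpecialLinearGroup ι (ZMod 2)) := by
    rw [← Projectivization.SL_mulAction_ker]
    refine MonoidHom.mem_ker.2 (Equiv.ext fun p => ?_)
    exact Set.eq_univ_iff_forall.1 hfix p ⟨g, hg⟩
  obtain ⟨r, hr, hscalar⟩ := mem_center_iff.1 hc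
  obtain rfl : r = 1 := by
    rcases (by decide : ∀ r : ZMod 2, r = 0 ∨ r = 1) r with rfl | rfl
    · rw [zero_pow (by omega)] at hr
      exact absurd hr zero_ne_one
    · rfl
  ext a b
  simp [← hscalar]

/-- The integer matrices `A` such that some element of `H` is congruent to `1 + 2A` modulo `4`. -/
def levelTwoResidues (H : Subgroup (SpecialLinearGroup ι ℤ)) : AddSubgroup (Matrix ι ι ℤ) where
  carrier := {A | ∃ e ∈ H, ∃ B : Matrix ι ι ℤ, (e : Matrix ι ι ℤ) = 1 + 2 • A + 4 • B}
  zero_mem' := ⟨1, H.one_mem, 0, by simp⟩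
  add_mem' := by
    rintro A A' ⟨e, he, B, hB⟩ ⟨e', he', B', hB'⟩
    refine ⟨e * e', H.mul_mem he he', B + B' + A * A' + 2 • (A * B') + 2 • (B * A')
      + 4 • (B * B'), ?_⟩
    rw [coe_mul, hB, hB']
    simp only [mul_add, add_mul, smul_mul_assoc, mul_smul_comm, smul_smul, mul_one, one_mul,
      smul_add]
    abel
  neg_mem' := by
    rintro A ⟨e, he, B, hB⟩
    refine ⟨e, he, A + B, ?_⟩
    rw [hB]
    module

lemma two_smul_mem_levelTwoResidues (H : Subgroup (SpecialLinearGroup ι ℤ)) (A : Matrix ι ι ℤ) :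
    2 • A ∈ levelTwoResidues H :=
  ⟨1, H.one_mem, -A, by rw [coe_one]; module⟩

lemma single_mem_levelTwoResidues {H : Subgroup (SpecialLinearGroup ι ℤ)}
    (hH : ∀ (i j : ι) (hij : i ≠ j) (c : ℤ), transvection hij c ∈ H) {i j : ι} (hij : i ≠ j)
    (c : ℤ) : single i j c ∈ levelTwoResidues H :=
  ⟨_, hH i j hij (2 * c), 0, by simp [transvection_coe, smul_single]⟩

lemma single_sub_single_mem_levelTwoResidues {H : Subgroup (SpecialLinearGroup ι ℤ)}
    (hH : ∀ (i j : ι) (hij : i ≠ j) (c : ℤ), transvection hij c ∈ H) (i j : ι) (c : ℤ) :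
    single i i c - single j j c ∈ levelTwoResidues H := by
  rcases eq_or_ne i j with rfl | hij
  · simp
  have hc : single j i c + single i i c - single j j c - single i j c ∈ levelTwoResidues H := by
    refine ⟨transvection hij 1 * transvection hij.symm (2 * c) * (transvection hij 1)⁻¹,
      H.mul_mem (H.mul_mem (hH ..) (hH ..)) (H.inv_mem (hH ..)), 0, ?_⟩
    rw [transvection_inv]
    simp only [coe_mul, transvection_coe, mul_add, add_mul, mul_one, one_mul,
      single_mul_single_same,
      single_mul_single_of_ne _ _ _ _ hij.symm, ← single_neg, mul_neg, smul_add, smul_sub,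
      smul_single, smul_zero, add_zero, nsmul_eq_mul, Nat.cast_ofNat]
    abel
  have := (levelTwoResidues H).sub_mem
    ((levelTwoResidues H).add_mem hc (single_mem_levelTwoResidues hH hij c))
    (single_mem_levelTwoResidues hH hij.symm c)
  convert this using 1
  abel

lemma mem_levelTwoResidues_of_even_trace [Nonempty ι] {H : Subgroup (SpecialLinearGroup ι ℤ)}
    (hH : ∀ (i j : ι) (hij : i ≠ j) (c : ℤ), transvection hij c ∈ H) {A : Matrix ι ι ℤ}
    (hA : Even A.trace) : A ∈ levelTwoResidues H := by
  obtain ⟨o⟩ := ‹Nonempty ι›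
  obtain ⟨m, hm⟩ := hA
  have key : A = ∑ i, ∑ j, (single i j (A i j) - if i = j then single o o (A i i) else 0)
      + 2 • single o o m := by
    have htr : ∑ i, single o o (A i i) = single o o A.trace := by
      rw [Matrix.trace, ← singleAddMonoidHom_apply, map_sum]; rfl
    simp only [Finset.sum_sub_distrib, Finset.sum_ite_eq, Finset.mem_univ, if_true, htr,
      ← matrix_eq_sum_single, hm, two_smul, single_add]
    abel
  rw [key]
  refine add_mem (sum_mem fun i _ => sum_mem fun j _ => ?_) (two_smul_mem_levelTwoResidues H _)
  split_ifs with hij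
  · subst hij
    exact single_sub_single_mem_levelTwoResidues hH _ _ _
  · rw [sub_zero]
    exact single_mem_levelTwoResidues hH hij _

lemma map_castRingHom_eq_iff {m : ℕ} {g h : SpecialLinearGroup ι ℤ} :
    SpecialLinearGroup.map (Int.castRingHom (ZMod m)) g =
      SpecialLinearGroup.map (Int.castRingHom (ZMod m)) h ↔
      ∃ B : Matrix ι ι ℤ, (g : Matrix ι ι ℤ) = h + m • B := by
  constructor
  · intro hgh
    have hdvd : ∀ i j, ∃ b, (g : Matrix ι ι ℤ) i j - h i j = m * b := fun i j => by
      have := congrArg (fun x : SpecialLinearGroup ι (ZMod m) => x i j) hgh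
      simp only [map_apply_coe, RingHom.mapMatrix_apply, Matrix.map_apply, Int.coe_castRingHom]
        at this
      exact (ZMod.intCast_eq_intCast_iff_dvd_sub _ _ _).1 this.symm
    choose b hb using hdvd
    refine ⟨of b, ?_⟩
    ext i j
    simp [← hb]
  · rintro ⟨B, hB⟩
    ext i j
    simp [hB, -nsmul_eq_mul, Matrix.smul_apply]

lemma eq_top_of_transvection_mem_of_level_four [Nontrivial ι]
    {H : Subgroup (SpecialLinearGroup ι ℤ)}
    (hH : ∀ (i j : ι) (hij : i ≠ j) (c : ℤ), transvection hij c ∈ H)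
    (h4 : (SpecialLinearGroup.map (n := ι) (Int.castRingHom (ZMod 4))).ker ≤ H) : H = ⊤ := by
  have hmap : H.map (SpecialLinearGroup.map (Int.castRingHom (ZMod 2))) = ⊤ := by
    refine eq_top_of_transvection_mem_zmod_two fun i j hij c => ⟨_, hH i j hij c.val, ?_⟩
    simp [map_transvection]
  refine eq_top_iff.2 fun M _ => ?_
  obtain ⟨h, hh, hhM⟩ :=
    hmap ▸ Subgroup.mem_top (SpecialLinearGroup.map (Int.castRingHom (ZMod 2)) M)
  set k := h⁻¹ * M with hk
  suffices k ∈ H by simpa [hk] using H.mul_mem hh this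
  obtain ⟨A, hA⟩ : ∃ A : Matrix ι ι ℤ, (k : Matrix ι ι ℤ) = (1 : SpecialLinearGroup ι ℤ) + 2 • A :=
    map_castRingHom_eq_iff.1 (by rw [hk, map_mul, map_inv, hhM, map_one, inv_mul_cancel])
  rw [coe_one] at hA
  have htr : Even A.trace := by
    have hdet := k.det_coe
    rw [hA, ← Nat.cast_smul_eq_nsmul ℤ, det_one_add_smul] at hdet
    rw [Int.even_iff]
    push_cast at hdet
    omega
  obtain ⟨e, he, B, hB⟩ := mem_levelTwoResidues_of_even_trace hH htr
  have hek : e * k⁻¹ ∈ H := h4 <| by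
    rw [MonoidHom.mem_ker, map_mul, map_inv, mul_inv_eq_one]
    exact map_castRingHom_eq_iff.2 ⟨B, by rw [hB, hA]⟩
  simpa using H.mul_mem (H.inv_mem hek) he

open scoped commutatorElement in
lemma commutator_mem_ker_level_four {g h : SpecialLinearGroup ι ℤ}
    (hg : SpecialLinearGroup.map (Int.castRingHom (ZMod 2)) g = 1)
    (hh : SpecialLinearGroup.map (Int.castRingHom (ZMod 2)) h = 1) :
    ⁅g, h⁆ ∈ (SpecialLinearGroup.map (n := ι) (Int.castRingHom (ZMod 4))).ker := by
  rw [MonoidHom.mem_ker, map_commutatorElement, commutatorElement_eq_one_iff_mul_comm,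
    ← map_mul, ← map_mul, map_castRingHom_eq_iff]
  rw [← map_one (SpecialLinearGroup.map (Int.castRingHom (ZMod 2))),
    map_castRingHom_eq_iff] at hg hh
  obtain ⟨A, hA⟩ := hg
  obtain ⟨B, hB⟩ := hh
  refine ⟨A * B - B * A, ?_⟩
  simp only [coe_mul, hA, hB, coe_one, mul_add, add_mul, mul_one, one_mul, smul_mul_assoc,
    mul_smul_comm, smul_sub]
  abel

/-- A subgroup of `SL(ℤ)` normalized by the elementary matrices, containing the level `4`
congruence subgroup and nontrivial modulo `2` is everything. -/
lemma eq_top_of_level_four (hι : 3 ≤ Fintype.card ι) {H : Subgroup (SpecialLinearGroup ι ℤ)}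
    (hnorm : ∀ (i j : ι) (hij : i ≠ j) (c : ℤ),
      SpecialLinearGroup.transvection hij c ∈ Subgroup.normalizer (H : Set _))
    (h4 : (SpecialLinearGroup.map (n := ι) (Int.castRingHom (ZMod 4))).ker ≤ H)
    (h2 : H.map (SpecialLinearGroup.map (Int.castRingHom (ZMod 2))) ≠ ⊥) : H = ⊤ := by
  have : Nontrivial ι := Fintype.one_lt_card_iff_nontrivial.1 (by omega)
  have hN : H.Normal := Subgroup.normalizer_eq_top_iff.1 <|
    eq_top_of_transvection_mem_of_level_four hnorm (h4.trans Subgroup.le_normalizer)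
  have hrange : (SpecialLinearGroup.map (n := ι) (Int.castRingHom (ZMod 2))).range = ⊤ := by
    refine eq_top_of_transvection_mem_zmod_two fun i j hij c => ⟨transvection hij c.val, ?_⟩
    simp [map_transvection]
  have hmapN := hN.map _ (MonoidHom.range_eq_top.1 hrange)
  have hmap := eq_top_of_normal_zmod_two hι _ h2
  have hrep : ∀ x : SpecialLinearGroup ι ℤ, ∃ k,
      SpecialLinearGroup.map (Int.castRingHom (ZMod 2)) k = 1 ∧
      (QuotientGroup.mk k : SpecialLinearGroup ι ℤ ⧸ H) = QuotientGroup.mk x := fun x => by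
    obtain ⟨h, hh, hx⟩ :=
      hmap ▸ Subgroup.mem_top (SpecialLinearGroup.map (Int.castRingHom (ZMod 2)) x)
    refine ⟨x * h⁻¹, by rw [map_mul, map_inv, hx, mul_inv_cancel], ?_⟩
    rw [QuotientGroup.mk_mul, (QuotientGroup.eq_one_iff _).2 (H.inv_mem hh), mul_one]
  have hcomm : commutator (SpecialLinearGroup ι ℤ) ≤ H := by
    refine Subgroup.commutator_le.2 fun x _ y _ => (QuotientGroup.eq_one_iff _).1 ?_
    obtain ⟨k, hk, hkx⟩ := hrep x
    obtain ⟨l, hl, hly⟩ := hrep y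
    have := (QuotientGroup.eq_one_iff (N := H) _).2 (h4 (commutator_mem_ker_level_four hk hl))
    rw [← QuotientGroup.mk'_apply, map_commutatorElement] at this ⊢
    simpa only [QuotientGroup.mk'_apply, hkx, hly] using this
  exact eq_top_of_transvection_mem_of_level_four
    (fun i j hij c => hcomm (transvection_mem_commutator_of_three_le_card hι hij c)) h4

end SpecialLinear

/-- The endomorphism of the free group sending `x_j` to `x_j x_i ^ c` and fixing the other
generators. -/
def nielsenHom {n : ℕ} (i j : Fin n) (c : ℤ) : FreeGroup (Fin n) →* FreeGroup (Fin n) :=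
  FreeGroup.lift fun k => if k = j then FreeGroup.of j * FreeGroup.of i ^ c else FreeGroup.of k

lemma nielsenHom_comp_neg {n : ℕ} {i j : Fin n} (hij : i ≠ j) (c : ℤ) :
    (nielsenHom i j c).comp (nielsenHom i j (-c)) = MonoidHom.id _ := by
  ext k
  by_cases hk : k = j <;> simp [nielsenHom, hk, hij]

/-- The Nielsen automorphism sending `x_j` to `x_j x_i ^ c`. -/
def nielsen {n : ℕ} {i j : Fin n} (hij : i ≠ j) (c : ℤ) : FrAut n :=
  MonoidHom.toMulEquiv (nielsenHom i j c) (nielsenHom i j (-c))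
    (by simpa using nielsenHom_comp_neg hij (-c)) (nielsenHom_comp_neg hij c)

lemma ρ_nielsen {n : ℕ} {i j : Fin n} (hij : i ≠ j) (c : ℤ) :
    ρ n (nielsen hij c) = toGLZ n (SpecialLinearGroup.transvection hij c) := by
  refine Units.ext ?_
  ext a b
  change (expSum a (nielsenHom i j c (FreeGroup.of b))).toAdd = transvection i j c a b
  by_cases hb : b = j
  · subst hb
    simp only [nielsenHom, expSum, FreeGroup.lift_apply_of, if_true, map_mul, map_zpow, toAdd_mul,
      toAdd_zpow, toAdd_ofAdd, Matrix.transvection, Matrix.add_apply, single_apply, one_apply,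
      and_true, smul_eq_mul, mul_ite, mul_one, mul_zero, eq_comm (a := b)]
  · simp only [nielsenHom, expSum, FreeGroup.lift_apply_of, hb, if_false, toAdd_ofAdd,
      Matrix.transvection, Matrix.add_apply, single_apply, one_apply, Ne.symm hb, and_false,
      add_zero, eq_comm (a := b)]

lemma SAut_le_of_toGLZ_comap_eq_top {n : ℕ} {N : Subgroup (FrAut n)} (h1 : IA n ≤ N)
    (h : Subgroup.comap (toGLZ n) (N.map (ρ n)) = ⊤) : SAut n ≤ N := by
  intro g hg
  have hdet : (ρ n g).val.det = 1 := congrArg Units.val (MonoidHom.mem_ker.1 hg)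
  let A : SpecialLinearGroup (Fin n) ℤ := ⟨(ρ n g).val, hdet⟩
  obtain ⟨m, hm, hmg⟩ : A ∈ Subgroup.comap (toGLZ n) (N.map (ρ n)) := by
    rw [h]
    exact Subgroup.mem_top A
  have hρ : ρ n m = ρ n g := by rw [hmg]; exact Units.ext rfl
  have := N.mul_mem hm (h1 (show m⁻¹ * g ∈ IA n from MonoidHom.mem_ker.2 (by simp [hρ])))
  simpa using this

lemma ker_redSL_le_comap_toGLZ_GammaGL (n ℓ : ℕ) :
    (redSL n ℓ).ker ≤ (GammaGL n ℓ).comap (toGLZ n) := by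
  intro g hg
  refine ⟨MonoidHom.mem_ker.2 (Units.ext ?_), MonoidHom.mem_ker.2 (Units.ext g.det_coe)⟩
  have h : redSL n ℓ g = 1 := hg
  exact congrArg (fun x : SpecialLinearGroup (Fin n) (ZMod ℓ) => x.val) h

lemma transvection_mem_normalizer_comap {n : ℕ} (N : Subgroup (FrAut n)) [hN : N.Normal]
    {i j : Fin n} (hij : i ≠ j) (c : ℤ) :
    SpecialLinearGroup.transvection hij c ∈
      Subgroup.normalizer (Subgroup.comap (toGLZ n) (N.map (ρ n)) : Set _) := by
  have h : ρ n (nielsen hij c) ∈ Subgroup.normalizer (N.map (ρ n) : Set _) :=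
    Subgroup.le_normalizer_map _ ⟨_, by rw [Subgroup.normalizer_eq_top]; trivial, rfl⟩
  rw [ρ_nielsen] at h
  exact Subgroup.le_normalizer_comap _ h

/-- **Lemma 3.8 (level 4).** For `n ≥ 3`, `n ≠ 4`, and `f ∈ Aut(F_n)`: if `IA_n ⊆ N(f)`,
`Γ_n(4) ⊆ ρ(N(f))`, and the image of `ρ(N(f)) ∩ SL_n(ℤ)` in `SL_n(ℤ/2ℤ)` is nontrivial,
then `N(f) = SAut(F_n)` if `det f̄ = 1` and `N(f) = Aut(F_n)` if `det f̄ = -1`. -/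
theorem normalClosure_of_level_four (n : ℕ) (hn : 3 ≤ n) (hn4 : n ≠ 4) (f : FrAut n)
    (h1 : IA n ≤ Subgroup.normalClosure {f})
    (h2 : GammaGL n 4 ≤ (Subgroup.normalClosure {f}).map (ρ n))
    (h3 : Subgroup.map (redSL n 2)
        (Subgroup.comap (toGLZ n) ((Subgroup.normalClosure {f}).map (ρ n))) ≠ ⊥) :
    (detρ n f = 1 → Subgroup.normalClosure {f} = SAut n) ∧
    (detρ n f = -1 → Subgroup.normalClosure {f} = ⊤) := by
  have hle : SAut n ≤ Subgroup.normalClosure {f} :=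
    SAut_le_of_toGLZ_comap_eq_top h1 <| eq_top_of_level_four (by simpa using hn)
      (fun i j hij c => transvection_mem_normalizer_comap _ hij c)
      ((ker_redSL_le_comap_toGLZ_GammaGL n 4).trans (Subgroup.comap_mono h2)) h3
  have hf : f ∈ Subgroup.normalClosure {f} := Subgroup.subset_normalClosure rfl
  refine ⟨fun hdet => le_antisymm ?_ hle, fun hdet => eq_top_iff.2 fun g _ => ?_⟩
  · have : (SAut n).Normal := MonoidHom.normal_ker _
    exact Subgroup.normalClosure_le_normal (Set.singleton_subset_iff.2 hdet)
  · rcases Int.units_eq_one_or (detρ n g) with hg | hg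
    · exact hle hg
    · have := Subgroup.mul_mem _ hf (hle (show f⁻¹ * g ∈ SAut n from
        MonoidHom.mem_ker.2 (by simp [hdet, hg])))
      simpa using this

end NormalClosurePaper
end
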